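/- If B_1, B_2 are commuting 2×2 complex matrices which are not simultaneously diagonalizable and B_1 is cyclic (has a cyclic vector), then the pair (B_1, B_2) is not hypercyclic on ℂ². -/

import Mathlib

open Matrix in
lemma aux_pow (a b : ℂ) (k : ℕ) :
    (!![a, b; 0, a] : Matrix (Fin 2) (Fin 2) ℂ) ^ k = !![a ^ k, k * a ^ (k - 1) * b; 0, a ^ k] := by
  induction k with
  | zero => ext i j; fin_cases i <;> fin_cases j <;> simp
  | succ k ih =>
    rw [pow_succ, ih]
    ext i j
    rcases k with _ | k <;> fin_cases i <;> fin_cases j <;> simp [Matrix.mul_apply] <;> ring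

lemma aux_geom (m c : ℂ) : ∃ U : Set ℂ, IsOpen U ∧ U.Nonempty ∧ (0 : ℂ) ∉ U ∧
    ∀ l : ℕ, m ^ l * c ∉ U := by
  by_cases hc : c = 0
  · refine ⟨{0}ᶜ, isOpen_compl_singleton, ⟨1, by simp⟩, by simp, by simp [hc]⟩
  by_cases hm : ‖m‖ ≤ 1
  · refine ⟨{z | ‖c‖ < ‖z‖}, isOpen_lt continuous_const continuous_norm, ⟨2 * c, ?_⟩, ?_, ?_⟩
    · have := norm_pos_iff.2 hc
      simp only [Set.mem_ofPred_eq, norm_mul, RCLike.norm_ofNat]; linarith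
    · simp
    · intro l
      have : ‖m‖ ^ l ≤ 1 := pow_le_one₀ (norm_nonneg _) hm
      simp only [Set.mem_ofPred_eq, norm_mul, norm_pow, not_lt]
      exact mul_le_of_le_one_left (norm_nonneg _) this
  · refine ⟨{z | 0 < ‖z‖} ∩ {z | ‖z‖ < ‖c‖}, (isOpen_lt continuous_const continuous_norm).inter
      (isOpen_lt continuous_norm continuous_const), ⟨c / 2, ?_⟩, ?_, ?_⟩
    · have := norm_pos_iff.2 hc
      simp only [Set.mem_inter_iff, Set.mem_ofPred_eq, norm_div, RCLike.norm_ofNat]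
      constructor <;> linarith
    · simp
    · intro l h
      have : 1 ≤ ‖m‖ ^ l := one_le_pow₀ (le_of_not_ge hm)
      have h2 := h.2
      simp only [Set.mem_ofPred_eq, norm_mul, norm_pow] at h2
      nlinarith [norm_nonneg c]

lemma aux_open (S : Set (Fin 2 → ℂ)) (U : Set ℂ) (hU : IsOpen U)
    (hne : U.Nonempty) (h : ∀ y ∈ S, y 1 ∉ U) : ¬ Dense S := by
  intro hd
  obtain ⟨u, hu⟩ := hne
  obtain ⟨y, hy, hyS⟩ := hd.inter_open_nonempty ((fun y : Fin 2 → ℂ => y 1) ⁻¹' U)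
    (hU.preimage (continuous_apply 1)) ⟨fun _ => u, hu⟩
  exact h y hyS hy

lemma aux_orbit (a b m q : ℂ) (x : Fin 2 → ℂ) (k l : ℕ) :
    ((!![a, b; 0, a] : Matrix (Fin 2) (Fin 2) ℂ) ^ k * !![m, q; 0, m] ^ l).mulVec x =
    ![a ^ k * m ^ l * x 0 + (a ^ k * (l * m ^ (l - 1) * q) + k * a ^ (k - 1) * b * m ^ l) * x 1,
      a ^ k * m ^ l * x 1] := by
  rw [aux_pow, aux_pow]
  ext i
  fin_cases i <;> simp [Matrix.mulVec, dotProduct, Fin.sum_univ_two]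

lemma aux_core (a b m q : ℂ) (x : Fin 2 → ℂ) :
    ¬ Dense {y : Fin 2 → ℂ | ∃ k1 k2 : ℕ,
      y = ((!![a, b; 0, a] : Matrix (Fin 2) (Fin 2) ℂ) ^ k1 * !![m, q; 0, m] ^ k2).mulVec x} := by
  by_cases ha : a = 0
  · obtain ⟨U, hU, hne, h0, hl⟩ := aux_geom m (x 1)
    refine aux_open _ U hU hne ?_
    rintro y ⟨k, l, rfl⟩
    rw [aux_orbit, ha]
    rcases k with _ | k
    · simpa using hl l
    · simpa using h0
  by_cases hm : m = 0
  · obtain ⟨U, hU, hne, h0, hl⟩ := aux_geom a (x 1)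
    refine aux_open _ U hU hne ?_
    rintro y ⟨k, l, rfl⟩
    rw [aux_orbit, hm]
    rcases l with _ | l
    · simpa using hl k
    · simpa using h0
  by_cases hx : x 1 = 0
  · refine aux_open _ {0}ᶜ isOpen_compl_singleton ⟨1, by simp⟩ ?_
    rintro y ⟨k, l, rfl⟩
    rw [aux_orbit]
    simp [hx]
  obtain ⟨c, hc, hcq⟩ : ∃ c : ℂ, c ≠ 0 ∧ (c * (q / m)).re = 0 := by
    by_cases hq : q / m = 0
    · exact ⟨1, one_ne_zero, by simp [hq]⟩
    · exact ⟨Complex.I / (q / m), div_ne_zero Complex.I_ne_zero hq, by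
        rw [div_mul_cancel₀ _ hq]; simp⟩
  set t : ℝ := (c * (b / a)).re with ht
  -- an open interval missed by the multiples of `t`
  obtain ⟨s, hs, hsk⟩ : ∃ s : ℝ, 0 < s ∧ ∀ k : ℕ, ¬ (0 < k * t ∧ k * t < s) := by
    by_cases h : 0 < t
    · refine ⟨t, h, ?_⟩
      rintro k ⟨h1, h2⟩
      rcases k with _ | k
      · simp at h1
      · push_cast at h2
        nlinarith [mul_nonneg (Nat.cast_nonneg (α := ℝ) k) h.le]
    · refine ⟨1, one_pos, ?_⟩
      rintro k ⟨h1, -⟩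
      nlinarith [mul_nonneg (Nat.cast_nonneg (α := ℝ) k) (sub_nonneg.2 (not_lt.1 h))]
  set g : (Fin 2 → ℂ) → ℝ := fun y => (c * (y 0 / y 1 - x 0 / x 1)).re with hg
  have hgc : ContinuousOn g {y | y 1 ≠ 0} := by
    apply Complex.continuous_re.comp_continuousOn
    apply continuousOn_const.mul
    apply ContinuousOn.sub _ continuousOn_const
    exact (continuous_apply 0).continuousOn.div (continuous_apply 1).continuousOn (fun y hy => hy)
  have hV : IsOpen {y : Fin 2 → ℂ | y 1 ≠ 0} :=
    isOpen_ne_fun (continuous_apply 1) continuous_const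
  have hW := hgc.isOpen_inter_preimage hV (isOpen_Ioo (a := (0:ℝ)) (b := s))
  intro hd
  obtain ⟨y, ⟨hy1, hy2⟩, k, l, rfl⟩ := hd.inter_open_nonempty _ hW
    ⟨![x 0 / x 1 + (s / 2 : ℝ) / c, 1], by simp, by
      simp only [Set.mem_preimage, hg, Matrix.cons_val_zero, Matrix.cons_val_one, div_one,
        add_sub_cancel_left, mul_div_cancel₀ _ hc, Complex.ofReal_re]
      constructor <;> linarith⟩
  apply hsk k
  have key : g (((!![a, b; 0, a] : Matrix (Fin 2) (Fin 2) ℂ) ^ k * !![m, q; 0, m] ^ l).mulVec x)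
      = k * t := by
    rw [aux_orbit]
    have e : c * ((a ^ k * m ^ l * x 0 +
        (a ^ k * (l * m ^ (l - 1) * q) + k * a ^ (k - 1) * b * m ^ l) * x 1) /
        (a ^ k * m ^ l * x 1) - x 0 / x 1) =
        ((k : ℝ) : ℂ) * (c * (b / a)) + ((l : ℝ) : ℂ) * (c * (q / m)) := by
      have e1 : (k : ℂ) * a ^ (k - 1) = k * (a ^ k / a) := by
        rcases k with _ | k
        · simp
        · rw [pow_succ]; field_simp; simp
      have e2 : (l : ℂ) * m ^ (l - 1) = l * (m ^ l / m) := by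
        rcases l with _ | l
        · simp
        · rw [pow_succ]; field_simp; simp
      rw [e1, e2]
      push_cast
      field_simp
      ring
    simp only [hg, Matrix.cons_val_zero, Matrix.cons_val_one]
    rw [e, Complex.add_re, Complex.re_ofReal_mul, Complex.re_ofReal_mul, hcq, ht]
    ring
  rw [Set.mem_preimage, key] at hy2
  exact hy2

lemma aux_tri (B : Matrix (Fin 2) (Fin 2) ℂ) : ∃ P : Matrix (Fin 2) (Fin 2) ℂ, IsUnit P ∧
    (P⁻¹ * B * P) 1 0 = 0 := by
  obtain ⟨r, hr⟩ := Module.End.exists_eigenvalue (Matrix.toLin' B)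
  obtain ⟨v, hv⟩ := hr.exists_hasEigenvector
  have hBv : B.mulVec v = r • v := by simpa using hv.apply_eq_smul
  have hv0 := hv.2
  set P : Matrix (Fin 2) (Fin 2) ℂ := !![v 0, - star (v 1); v 1, star (v 0)] with hP
  have hdet : P.det ≠ 0 := by
    rw [hP, Matrix.det_fin_two_of]
    intro h
    apply hv0
    have h' : ((Complex.normSq (v 0) + Complex.normSq (v 1) : ℝ) : ℂ) = 0 := by
      push_cast
      rw [← h, ← Complex.mul_conj, ← Complex.mul_conj]
      simp; ring
    have h'' : Complex.normSq (v 0) + Complex.normSq (v 1) = 0 := by exact_mod_cast h'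
    have n0 := Complex.normSq_nonneg (v 0)
    have n1 := Complex.normSq_nonneg (v 1)
    ext i
    fin_cases i
    · exact Complex.normSq_eq_zero.1 (show Complex.normSq (v 0) = 0 by linarith)
    · exact Complex.normSq_eq_zero.1 (show Complex.normSq (v 1) = 0 by linarith)
  have hu : IsUnit P.det := isUnit_iff_ne_zero.2 hdet
  refine ⟨P, (Matrix.isUnit_iff_isUnit_det P).2 hu, ?_⟩
  have hPe : P.mulVec (Pi.single 0 1) = v := by
    ext i; fin_cases i <;> simp [hP]
  have h1 : (P⁻¹ * B * P).mulVec (Pi.single 0 1) = r • (Pi.single 0 1) := by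
    rw [← Matrix.mulVec_mulVec, ← Matrix.mulVec_mulVec, hPe, hBv, Matrix.mulVec_smul, ← hPe,
      Matrix.mulVec_mulVec, Matrix.nonsing_inv_mul P hu, Matrix.one_mulVec]
  have h2 := congrFun h1 1
  simpa using h2

theorem commuting_cyclic_pair_not_hypercyclic
    (B1 B2 : Matrix (Fin 2) (Fin 2) ℂ)
    (hcomm : B1 * B2 = B2 * B1)
    (hnotdiag : ¬ ∃ P : Matrix (Fin 2) (Fin 2) ℂ, IsUnit P ∧
      (P⁻¹ * B1 * P).IsDiag ∧ (P⁻¹ * B2 * P).IsDiag)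
    (hcyclic : ∃ v : Fin 2 → ℂ,
      Submodule.span ℂ {x : Fin 2 → ℂ | ∃ m : ℕ, x = (B1 ^ m).mulVec v} = ⊤) :
    ∀ x : Fin 2 → ℂ,
      ¬ Dense {y : Fin 2 → ℂ | ∃ k1 k2 : ℕ, y = (B1 ^ k1 * B2 ^ k2).mulVec x} := by
  intro x hd
  obtain ⟨P, hPu, hT10⟩ := aux_tri B1
  have hu : IsUnit P.det := (Matrix.isUnit_iff_isUnit_det P).1 hPu
  have hPP : P * P⁻¹ = 1 := Matrix.mul_nonsing_inv P hu
  have hPP' : P⁻¹ * P = 1 := Matrix.nonsing_inv_mul P hu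
  have hconj : ∀ A B : Matrix (Fin 2) (Fin 2) ℂ,
      (P⁻¹ * A * P) * (P⁻¹ * B * P) = P⁻¹ * (A * B) * P := by
    intro A B
    calc _ = P⁻¹ * A * (P * P⁻¹) * B * P := by noncomm_ring
      _ = _ := by rw [hPP]; noncomm_ring
  have hpow : ∀ (A : Matrix (Fin 2) (Fin 2) ℂ) (k : ℕ),
      (P⁻¹ * A * P) ^ k = P⁻¹ * A ^ k * P := by
    intro A k
    induction k with
    | zero => simp [hPP']
    | succ k ih => rw [pow_succ, ih, hconj, pow_succ]
  have hTS := (hconj B1 B2).trans ((congrArg (fun M => P⁻¹ * M * P) hcomm).trans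
    (hconj B2 B1).symm)
  have hB1 : B1 = P * (P⁻¹ * B1 * P) * P⁻¹ := by
    calc B1 = (P * P⁻¹) * B1 * (P * P⁻¹) := by rw [hPP]; simp
      _ = _ := by noncomm_ring
  set T := P⁻¹ * B1 * P with hT
  set S := P⁻¹ * B2 * P with hS
  have c00 := congrFun (congrFun hTS 0) 0
  have c01 := congrFun (congrFun hTS 0) 1
  have c10 := congrFun (congrFun hTS 1) 0
  simp only [Matrix.mul_apply, Fin.sum_univ_two, hT10] at c00 c01 c10
  by_cases hd' : T 0 0 = T 1 1
  · have hb : T 0 1 ≠ 0 := by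
      intro hb
      have hTs : T = T 0 0 • (1 : Matrix (Fin 2) (Fin 2) ℂ) := by
        ext i j; fin_cases i <;> fin_cases j <;> simp [hb, hT10, hd']
      have hBs : B1 = T 0 0 • (1 : Matrix (Fin 2) (Fin 2) ℂ) := by
        rw [hTs] at hB1
        rw [hB1]; simp [hPP]
      obtain ⟨v, hv⟩ := hcyclic
      have hle : Submodule.span ℂ {x : Fin 2 → ℂ | ∃ m : ℕ, x = (B1 ^ m).mulVec v}
          ≤ Submodule.span ℂ {v} := by
        rw [Submodule.span_le]
        rintro _ ⟨n, rfl⟩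
        rw [hBs, smul_pow, one_pow, Matrix.smul_mulVec, Matrix.one_mulVec]
        exact Submodule.smul_mem _ _ (Submodule.mem_span_singleton_self v)
      rw [hv, top_le_iff] at hle
      have h1 := finrank_span_le_card (R := ℂ) ({v} : Set (Fin 2 → ℂ))
      rw [hle, finrank_top] at h1
      simp at h1
    have hr : S 1 0 = 0 := by
      have : T 0 1 * S 1 0 = 0 := by linear_combination c00
      exact (mul_eq_zero.1 this).resolve_left hb
    have hs : S 1 1 = S 0 0 := by
      apply mul_left_cancel₀ hb
      linear_combination c01 - S 0 1 * hd'
    have hTe : T = !![T 0 0, T 0 1; 0, T 0 0] := by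
      ext i j; fin_cases i <;> fin_cases j <;> simp [hT10, hd']
    have hSe : S = !![S 0 0, S 0 1; 0, S 0 0] := by
      ext i j; fin_cases i <;> fin_cases j <;> simp [hr, hs]
    apply aux_core (T 0 0) (T 0 1) (S 0 0) (S 0 1) (P⁻¹.mulVec x)
    rw [← hTe, ← hSe]
    have hsurj : Function.Surjective (fun y : Fin 2 → ℂ => P⁻¹.mulVec y) := fun y =>
      ⟨P.mulVec y, by
        change P⁻¹.mulVec (P.mulVec y) = y
        rw [Matrix.mulVec_mulVec, hPP', Matrix.one_mulVec]⟩
    have hcont : Continuous (fun y : Fin 2 → ℂ => P⁻¹.mulVec y) :=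
      Continuous.matrix_mulVec continuous_const continuous_id
    refine (hsurj.denseRange.dense_image hcont hd).mono ?_
    rintro _ ⟨_, ⟨k, l, rfl⟩, rfl⟩
    refine ⟨k, l, ?_⟩
    rw [hT, hS, hpow, hpow, hconj]
    simp only [Matrix.mulVec_mulVec]
    rw [Matrix.mul_assoc (P⁻¹ * _), hPP, Matrix.mul_one]
  · have hne : T 1 1 - T 0 0 ≠ 0 := fun h => hd' (sub_eq_zero.1 h).symm
    have hr : S 1 0 = 0 := by
      refine (mul_eq_zero.1 ?_).resolve_left hne
      linear_combination c10
    apply hnotdiag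
    set u := T 0 1 / (T 1 1 - T 0 0) with hudef
    have hum : u * (T 1 1 - T 0 0) = T 0 1 := div_mul_cancel₀ _ hne
    have hus : S 0 1 + u * (S 0 0 - S 1 1) = 0 := by
      refine (mul_eq_zero.1 ?_).resolve_left hne
      linear_combination (S 0 0 - S 1 1) * hum - c01
    set Q : Matrix (Fin 2) (Fin 2) ℂ := !![1, u; 0, 1] with hQ
    have hQdet : Q.det = 1 := by simp [hQ, Matrix.det_fin_two_of]
    have hQi : Q⁻¹ = !![1, -u; 0, 1] := by
      apply Matrix.inv_eq_right_inv
      ext i j; fin_cases i <;> fin_cases j <;> simp [hQ]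
    refine ⟨P * Q, hPu.mul ((Matrix.isUnit_iff_isUnit_det Q).2 (by simp [hQdet])), ?_, ?_⟩
    · have : (P * Q)⁻¹ * B1 * (P * Q) = Q⁻¹ * T * Q := by
        rw [Matrix.mul_inv_rev, hT]; noncomm_ring
      rw [this, hQi, hQ]
      intro i j hij
      fin_cases i <;> fin_cases j <;>
        simp [Matrix.mul_apply, Matrix.vecMul, dotProduct, Fin.sum_univ_two, hT10] at hij ⊢
      linear_combination -hum
    · have : (P * Q)⁻¹ * B2 * (P * Q) = Q⁻¹ * S * Q := by
        rw [Matrix.mul_inv_rev, hS]; noncomm_ring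
      rw [this, hQi, hQ]
      intro i j hij
      fin_cases i <;> fin_cases j <;>
        simp [Matrix.mul_apply, Matrix.vecMul, dotProduct, Fin.sum_univ_two, hr] at hij ⊢
      linear_combination hus
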